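/- Let K'/K be an integral extension of G-graded fields (every homogeneous element of K' is integral over K), let O be a graded valuation ring of K, and let O' denote the graded integral closure of O in K'. Then: every graded prime ideal m' of O' lying over the graded maximal ideal m_O of O is a graded maximal ideal; for each such m' the graded localization O'_{m'} is a graded valuation ring of K' whose graded maximal ideal contracts to m' in O'; and every graded valuation ring of K' dominating O arises in this way. -/

import Mathlib

universe u v

/-- A `G`-graded commutative ring structure on `A`: graded pieces `deg g`,
multiplicativity of the grading, and an internal direct sum decomposition
recorded by the homogeneous-component function `comp`. -/
structure GradedStr (G : Type u) [CommGroup G] (A : Type v) [CommRing A] where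
  deg : G → AddSubgroup A
  one_mem : (1 : A) ∈ deg 1
  mul_mem : ∀ {g h : G} {a b : A}, a ∈ deg g → b ∈ deg h → a * b ∈ deg (g * h)
  comp : A → G → A
  comp_mem : ∀ a g, comp a g ∈ deg g
  comp_add : ∀ a b g, comp (a + b) g = comp a g + comp b g
  comp_of_mem : ∀ {a : A} {g : G}, a ∈ deg g → comp a g = a
  comp_of_mem_ne : ∀ {a : A} {g g' : G}, a ∈ deg g → g' ≠ g → comp a g' = 0
  finite_support : ∀ a : A, (Function.support (comp a)).Finite
  sum_comp : ∀ a : A, ∑ᶠ g, comp a g = a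

namespace GradedStr

variable {G : Type u} [CommGroup G] {A : Type v} [CommRing A]

/-- `a` is homogeneous: it lies in some graded piece. -/
def IsHomog (𝒜 : GradedStr G A) (a : A) : Prop := ∃ g, a ∈ 𝒜.deg g

/-- A `G`-graded field: a nonzero graded ring in which every nonzero homogeneous
element is invertible. -/
def IsGradedField (𝒜 : GradedStr G A) : Prop :=
  Nontrivial A ∧ ∀ a : A, 𝒜.IsHomog a → a ≠ 0 → IsUnit a

/-- A graded subring: a subring stable under taking homogeneous components. -/
def IsGradedSubring (𝒜 : GradedStr G A) (S : Subring A) : Prop :=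
  ∀ x ∈ S, ∀ g, 𝒜.comp x g ∈ S

/-- A graded subfield of a graded field: a graded subring containing the inverses of
its nonzero homogeneous elements. -/
def IsGradedSubfield (𝒜 : GradedStr G A) (S : Subring A) : Prop :=
  𝒜.IsGradedSubring S ∧ ∀ x ∈ S, 𝒜.IsHomog x → x ≠ 0 → Ring.inverse x ∈ S

/-- The additive subgroup of homogeneous polynomials of grading `h` in `K[g₀⁻¹ T]`,
the polynomial ring in which `T` is declared homogeneous of grading `g₀`: the
coefficient of `T^n` must be homogeneous of grading `h * g₀⁻ⁿ`. -/
def polyDeg (𝒜 : GradedStr G A) (g₀ h : G) : AddSubgroup (Polynomial A) where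
  carrier := {p | ∀ n : ℕ, p.coeff n ∈ 𝒜.deg (h * (g₀ ^ n)⁻¹)}
  zero_mem' := by intro n; simpa using (𝒜.deg (h * (g₀ ^ n)⁻¹)).zero_mem
  add_mem' := by
    intro p q hp hq n
    rw [Polynomial.coeff_add]
    exact (𝒜.deg _).add_mem (hp n) (hq n)
  neg_mem' := by
    intro p hp n
    rw [Polynomial.coeff_neg]
    exact (𝒜.deg _).neg_mem (hp n)

/-- A homogeneous polynomial in `K[g₀⁻¹T]`. -/
def IsHomogPoly (𝒜 : GradedStr G A) (g₀ : G) (p : Polynomial A) : Prop :=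
  ∃ h, p ∈ 𝒜.polyDeg g₀ h

/-- The graded fraction field of a graded subring of a graded field, computed inside
the ambient graded field: the subring generated by `S` together with the inverses of
the nonzero homogeneous elements of `S`. -/
def fracIn (𝒜 : GradedStr G A) (S : Subring A) : Subring A :=
  Subring.closure (↑S ∪ {y : A | ∃ x ∈ S, x ≠ 0 ∧ 𝒜.IsHomog x ∧ y = Ring.inverse x})

end GradedStr

/-- `x` is integral over the subring `S` (satisfies a monic polynomial equation with
coefficients in `S`). -/
def IntegralOver {A : Type v} [CommRing A] (S : Subring A) (x : A) : Prop :=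
  ∃ p : Polynomial A, p.Monic ∧ (∀ n, p.coeff n ∈ S) ∧ Polynomial.eval x p = 0

/-- Algebraic independence of a family of elements over a subring: the evaluation map
from the (multivariate) polynomial ring is injective.  (For homogeneous elements this
is graded algebraic independence, the grading playing no role in injectivity.) -/
def AlgIndepOver {A : Type v} [CommRing A] {ι : Type*} (S : Subring A) (T : ι → A) : Prop :=
  Function.Injective (MvPolynomial.eval₂Hom S.subtype T)

/-- A graded valuation ring of the graded subfield `F` of the ambient graded field:
a graded subring `O ⊆ F` such that every nonzero homogeneous element `f` of `F`
satisfies `f ∈ O` or `f⁻¹ ∈ O`. -/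
def IsGVRofSubfield {G : Type u} [CommGroup G] {A : Type v} [CommRing A]
    (𝒜 : GradedStr G A) (F : Subring A) (O : Subring A) : Prop :=
  O ≤ F ∧ 𝒜.IsGradedSubring O ∧
    ∀ f ∈ F, f ≠ 0 → 𝒜.IsHomog f → f ∈ O ∨ Ring.inverse f ∈ O

section Statement10

variable {G : Type u} [CommGroup G] {L : Type v} [CommRing L]

/-- The graded integral closure of the subring `S` inside the ambient graded ring:
the elements all of whose homogeneous components are integral over `S`. -/
def gIntClosure (𝒜 : GradedStr G L) (S : Subring L) : Set L :=
  {x : L | ∀ g, IntegralOver S (𝒜.comp x g)}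

/-- A homogeneous (graded) ideal of the graded subring `S` (given as a subset). -/
def IsHomogIdealOf (𝒜 : GradedStr G L) (S p : Set L) : Prop :=
  p ⊆ S ∧ (0 : L) ∈ p ∧ (∀ x ∈ p, ∀ y ∈ p, x + y ∈ p) ∧ (∀ x ∈ p, -x ∈ p) ∧
    (∀ s ∈ S, ∀ x ∈ p, s * x ∈ p) ∧ (∀ x ∈ p, ∀ g, 𝒜.comp x g ∈ p)

/-- A graded prime ideal of the graded subring `S` (given as a subset). -/
def IsGradedPrimeOf (𝒜 : GradedStr G L) (S p : Set L) : Prop :=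
  IsHomogIdealOf 𝒜 S p ∧ (1 : L) ∉ p ∧
    ∀ a ∈ S, ∀ b ∈ S, 𝒜.IsHomog a → 𝒜.IsHomog b → a * b ∈ p → a ∈ p ∨ b ∈ p

/-- The graded localization of the graded subring `S` at the homogeneous elements not
in `p`, computed inside the ambient graded field. -/
def gradedLoc (𝒜 : GradedStr G L) (S p : Set L) : Set L :=
  {x : L | ∃ a ∈ S, ∃ s ∈ S, 𝒜.IsHomog s ∧ s ∉ p ∧ s * x = a}

/-- The graded maximal ideal of a graded-local graded subring (given as a subset):
the elements all of whose nonzero homogeneous components are non-invertible in `S`. -/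
def gmaxIdeal (𝒜 : GradedStr G L) (S : Set L) : Set L :=
  {x : L | x ∈ S ∧ ∀ g, 𝒜.comp x g ≠ 0 → Ring.inverse (𝒜.comp x g) ∉ S}

/-- A graded valuation ring of the ambient graded field: a graded subring (given as a
subset) such that every nonzero homogeneous `f` satisfies `f ∈ S` or `f⁻¹ ∈ S`. -/
def IsGVRing (𝒜 : GradedStr G L) (S : Set L) : Prop :=
  (0 : L) ∈ S ∧ (1 : L) ∈ S ∧ (∀ x ∈ S, ∀ y ∈ S, x + y ∈ S) ∧
    (∀ x ∈ S, -x ∈ S) ∧ (∀ x ∈ S, ∀ y ∈ S, x * y ∈ S) ∧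
    (∀ x ∈ S, ∀ g, 𝒜.comp x g ∈ S) ∧
    ∀ f : L, f ≠ 0 → 𝒜.IsHomog f → f ∈ S ∨ Ring.inverse f ∈ S

/-! For a polynomial `P = ∑ cᵢ Xⁱ` over `O` with `P(f) = 0`, the Horner values
`bᵢ = ∑_{j ≥ i} cⱼ f ^ (j - i)` and the products `f bᵢ` are integral over `O`, and
`cᵢ = bᵢ - f bᵢ₊₁`. All three parts of the theorem are read off these relations.

* If some `cⱼ` is `1`, which can be arranged by dividing an equation of `f` over `K` by a
  coefficient of largest value, then one of `bⱼ` and `f bⱼ₊₁` is outside `p`, so `f = f bⱼ / bⱼ` or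
  `f⁻¹ = bⱼ₊₁ / (f bⱼ₊₁)` lies in the localization at `p`.
* If `P` is monic and `f` lies in an ideal `q ⊇ p` but not in `p`, then at the place where the `bᵢ`
  leave `p` the coefficient `cᵢ` lies in `q` but not in `p`; when `p` lies over the maximal ideal
  of `O`, this `cᵢ` is a unit of `O`, and `q` is the unit ideal.
* If `P` is monic of degree `n` and `V ⊇ O` is a valuation ring containing `f⁻¹`, the relation
  `bᵢ₊₁ = f⁻¹ (bᵢ - cᵢ)` puts all `bᵢ` in `V`, hence also `f = f bₙ`. So `V` contains the integral
  closure, and it equals the localization at its center because a graded valuation ring dominated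
  by another one is equal to it. -/

section Integrality

open Polynomial

theorem integralOver_iff_isIntegral (S : Subring L) (x : L) :
    IntegralOver S x ↔ IsIntegral S x := by
  constructor
  · rintro ⟨P, hP, hPS, hx⟩
    have hcoeffs : (↑P.coeffs : Set L) ⊆ S := fun c hc ↦ by
      obtain ⟨n, -, rfl⟩ := mem_coeffs_iff.1 hc
      exact hPS n
    refine ⟨P.toSubring S hcoeffs, (monic_toSubring P S hcoeffs).2 hP, ?_⟩
    rw [← eval_map, show algebraMap S L = S.subtype from rfl, map_toSubring, hx]
  · rintro ⟨Q, hQ, hx⟩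
    refine ⟨Q.map (algebraMap S L), hQ.map _, fun n ↦ ?_, by rw [eval_map, hx]⟩
    rw [coeff_map]
    exact (Q.coeff n).2

theorem IntegralOver.mono {S T : Subring L} (hST : S ≤ T) {x : L} (hx : IntegralOver S x) :
    IntegralOver T x :=
  let ⟨P, hP, hPS, hPx⟩ := hx
  ⟨P, hP, fun n ↦ hST (hPS n), hPx⟩

variable {R A : Type*} [CommRing R] [CommRing A] [Algebra R A]

-- With `m = deg Q`, `w = Q(x)` and `v = x * w`, the equation
-- `w ^ (m + 1) = ∑ qᵢ xⁱ w ^ m = ∑ qᵢ vⁱ w ^ (m - i)` is monic in `w`.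
theorem isIntegral_eval_of_isIntegral_mul_eval {Q : A[X]} {x : A}
    (hQ : ∀ n, IsIntegral R (Q.coeff n)) (hx : IsIntegral R (x * Q.eval x)) :
    IsIntegral R (Q.eval x) := by
  set w := Q.eval x with hw
  let c (i : ℕ) : integralClosure R A := ⟨Q.coeff i * (x * w) ^ i, (hQ i).mul (hx.pow i)⟩
  let T : (integralClosure R A)[X] :=
    ∑ i ∈ Finset.range (Q.natDegree + 1), C (c i) * X ^ (Q.natDegree - i)
  have hT : T.degree < (Q.natDegree + 1 : ℕ) :=
    degree_le_natDegree.trans_lt <| Nat.cast_lt.2 <| Nat.lt_succ_of_le <|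
      natDegree_sum_le_of_forall_le _ _ fun i _ ↦
        (natDegree_C_mul_X_pow_le _ _).trans (Nat.sub_le _ _)
  have hTw : aeval w T = w ^ (Q.natDegree + 1) := by
    have hterm : ∀ i ∈ Finset.range (Q.natDegree + 1),
        Q.coeff i * (x * w) ^ i * w ^ (Q.natDegree - i) = Q.coeff i * x ^ i * w ^ Q.natDegree := by
      intro i hi
      rw [← Nat.add_sub_of_le (Finset.mem_range_succ_iff.1 hi), Nat.add_sub_cancel_left, pow_add]
      ring
    calc aeval w T
        = ∑ i ∈ Finset.range (Q.natDegree + 1),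
            Q.coeff i * (x * w) ^ i * w ^ (Q.natDegree - i) := by
          simp [T, c]
      _ = (∑ i ∈ Finset.range (Q.natDegree + 1), Q.coeff i * x ^ i) * w ^ Q.natDegree := by
          rw [Finset.sum_congr rfl hterm, Finset.sum_mul]
      _ = w ^ (Q.natDegree + 1) := by rw [← eval_eq_sum_range, ← hw, pow_succ']
  have hwT : IsIntegral (integralClosure R A) w :=
    ⟨X ^ (Q.natDegree + 1) - T, monic_X_pow_sub hT, by
      rw [← aeval_def, map_sub, hTw, map_pow, aeval_X, sub_self]⟩
  exact isIntegral_trans _ hwT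

/-- The `i`-th intermediate value `∑_{j ≥ i} aⱼ x ^ (j - i)` of Horner's scheme for evaluating
`P = ∑ aⱼ Xʲ` at `x`. -/
noncomputable def hornerEval (P : A[X]) (x : A) (i : ℕ) : A := (divX^[i] P).eval x

theorem coeff_iterate_divX (P : A[X]) (i n : ℕ) : (divX^[i] P).coeff n = P.coeff (n + i) := by
  induction i generalizing n with
  | zero => rfl
  | succ i ih => rw [Function.iterate_succ_apply', coeff_divX, ih, add_right_comm, add_assoc]

theorem hornerEval_zero (P : A[X]) (x : A) : hornerEval P x 0 = P.eval x := rfl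

theorem hornerEval_eq_mul_add (P : A[X]) (x : A) (i : ℕ) :
    hornerEval P x i = x * hornerEval P x (i + 1) + P.coeff i := by
  have h := congrArg (eval x) (X_mul_divX_add (divX^[i] P))
  rw [eval_add, eval_mul, eval_X, eval_C, coeff_iterate_divX, zero_add] at h
  rw [hornerEval, ← h, hornerEval, Function.iterate_succ_apply']

theorem hornerEval_natDegree_of_monic {P : A[X]} (hP : P.Monic) (x : A) :
    hornerEval P x P.natDegree = 1 := by
  have h : divX^[P.natDegree] P = 1 := by
    ext n
    rw [coeff_iterate_divX, coeff_one]
    split_ifs with hn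
    · rw [hn, zero_add, hP.coeff_natDegree]
    · exact coeff_eq_zero_of_natDegree_lt (by omega)
  rw [hornerEval, h, eval_one]

theorem hornerEval_mem {P : A[X]} {x : A} {S : Subring A} (hP : ∀ n, P.coeff n ∈ S) (hx : x ∈ S)
    (i : ℕ) : hornerEval P x i ∈ S := by
  rw [hornerEval, eval_eq_sum_range]
  refine S.sum_mem fun n _ ↦ S.mul_mem ?_ (S.pow_mem hx n)
  rw [coeff_iterate_divX]
  exact hP _

theorem hornerEval_mem_of_eval_eq_zero {P : A[X]} {x y : A} {S : Subring A}
    (hP : ∀ n, P.coeff n ∈ S) (hPx : P.eval x = 0) (hy : y ∈ S) (hyx : y * x = 1) (i : ℕ) :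
    hornerEval P x i ∈ S := by
  induction i with
  | zero => rw [hornerEval_zero, hPx]; exact S.zero_mem
  | succ i ih =>
    have h : hornerEval P x (i + 1) = y * (hornerEval P x i - P.coeff i) := by
      rw [hornerEval_eq_mul_add P x i, add_sub_cancel_right, ← mul_assoc, hyx, one_mul]
    rw [h]
    exact S.mul_mem hy (S.sub_mem ih (hP i))

theorem mul_hornerEval_mem {P : A[X]} {x : A} {S : Subring A} (hP : ∀ n, P.coeff n ∈ S)
    (hPx : P.eval x = 0) (h : ∀ i, hornerEval P x i ∈ S) (i : ℕ) : x * hornerEval P x i ∈ S := by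
  cases i with
  | zero => rw [hornerEval_zero, hPx, mul_zero]; exact S.zero_mem
  | succ i =>
    rw [← add_sub_cancel_right (x * _) (P.coeff i), ← hornerEval_eq_mul_add]
    exact S.sub_mem (h i) (hP i)

theorem isIntegral_hornerEval {P : A[X]} {x : A} (hP : ∀ n, IsIntegral R (P.coeff n))
    (hPx : P.eval x = 0) (i : ℕ) : IsIntegral R (hornerEval P x i) := by
  induction i with
  | zero => rw [hornerEval_zero, hPx]; exact isIntegral_zero
  | succ i ih =>
    refine isIntegral_eval_of_isIntegral_mul_eval (fun n ↦ ?_) ?_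
    · rw [coeff_iterate_divX]
      exact hP _
    · change IsIntegral R (x * hornerEval P x (i + 1))
      rw [← add_sub_cancel_right (x * _) (P.coeff i), ← hornerEval_eq_mul_add]
      exact ih.sub (hP i)

theorem isIntegral_mul_hornerEval {P : A[X]} {x : A} (hP : ∀ n, IsIntegral R (P.coeff n))
    (hPx : P.eval x = 0) (i : ℕ) : IsIntegral R (x * hornerEval P x i) :=
  mul_hornerEval_mem (S := (integralClosure R A).toSubring) hP hPx (isIntegral_hornerEval hP hPx) i

end Integrality

namespace GradedStr

section Components

variable (𝒜 : GradedStr G L)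

/-- The projection to the graded piece of degree `g`, that is `comp · g`, as a homomorphism of
additive groups. -/
def compHom (g : G) : L →+ L := AddMonoidHom.mk' (𝒜.comp · g) fun a b ↦ 𝒜.comp_add a b g

theorem comp_zero (g : G) : 𝒜.comp 0 g = 0 := map_zero (𝒜.compHom g)

theorem comp_neg (x : L) (g : G) : 𝒜.comp (-x) g = -𝒜.comp x g := map_neg (𝒜.compHom g) x

theorem comp_sum {ι : Type*} (s : Finset ι) (f : ι → L) (g : G) :
    𝒜.comp (∑ i ∈ s, f i) g = ∑ i ∈ s, 𝒜.comp (f i) g := map_sum (𝒜.compHom g) f s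

theorem isHomog_one : 𝒜.IsHomog 1 := ⟨1, 𝒜.one_mem⟩

theorem isHomog_comp (x : L) (g : G) : 𝒜.IsHomog (𝒜.comp x g) := ⟨g, 𝒜.comp_mem x g⟩

variable {𝒜}

theorem IsHomog.mul {x y : L} (hx : 𝒜.IsHomog x) (hy : 𝒜.IsHomog y) : 𝒜.IsHomog (x * y) :=
  let ⟨_, hg⟩ := hx
  let ⟨_, hh⟩ := hy
  ⟨_, 𝒜.mul_mem hg hh⟩

theorem pow_mem_deg {x : L} {g : G} (hx : x ∈ 𝒜.deg g) (n : ℕ) : x ^ n ∈ 𝒜.deg (g ^ n) := by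
  induction n with
  | zero => simpa only [pow_zero] using 𝒜.one_mem
  | succ n ih => simpa only [pow_succ] using 𝒜.mul_mem ih hx

theorem forall_comp_iff_of_mem_deg {P : L → Prop} (h0 : P 0) {x : L} {g : G}
    (hx : x ∈ 𝒜.deg g) : (∀ k, P (𝒜.comp x k)) ↔ P x := by
  refine ⟨fun h ↦ 𝒜.comp_of_mem hx ▸ h g, fun h k ↦ ?_⟩
  by_cases hk : k = g
  · rwa [hk, 𝒜.comp_of_mem hx]
  · rwa [𝒜.comp_of_mem_ne hx hk]

theorem mem_of_forall_comp_mem {σ : Type*} [SetLike σ L] [AddSubmonoidClass σ L] {T : σ} {x : L}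
    (h : ∀ g, 𝒜.comp x g ∈ T) : x ∈ T := by
  rw [← 𝒜.sum_comp x]
  exact finsum_induction (· ∈ T) (zero_mem T) (fun _ _ ↦ add_mem) h

theorem mul_mem_of_forall_comp_mul_comp_mem {T : AddSubmonoid L} {x y : L}
    (h : ∀ g k, 𝒜.comp x g * 𝒜.comp y k ∈ T) : x * y ∈ T :=
  mem_of_forall_comp_mem (𝒜 := 𝒜) (T := T.comap (AddMonoidHom.mulRight y)) fun g ↦
    mem_of_forall_comp_mem (𝒜 := 𝒜) (T := T.comap (AddMonoidHom.mulLeft (𝒜.comp x g))) (h g)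

theorem comp_mul_of_mem_deg {x : L} {h : G} (hx : x ∈ 𝒜.deg h) (y : L) (g : G) :
    𝒜.comp (x * y) (h * g) = x * 𝒜.comp y g := by
  suffices ∀ k, 𝒜.comp y k ∈ ((𝒜.compHom (h * g)).comp (.mulLeft x)).eqLocusM
      ((AddMonoidHom.mulLeft x).comp (𝒜.compHom g)) from mem_of_forall_comp_mem this
  intro k
  change 𝒜.comp (x * 𝒜.comp y k) (h * g) = x * 𝒜.comp (𝒜.comp y k) g
  have hk := 𝒜.comp_mem y k
  by_cases hgk : g = k
  · rw [hgk, 𝒜.comp_of_mem (𝒜.mul_mem hx hk), 𝒜.comp_of_mem hk]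
  · rw [𝒜.comp_of_mem_ne (𝒜.mul_mem hx hk) (by simpa only [ne_eq, mul_right_inj] using hgk),
      𝒜.comp_of_mem_ne hk hgk, mul_zero]

theorem inverse_mem_deg {x : L} {g : G} (hx : x ∈ 𝒜.deg g) (hu : IsUnit x) :
    Ring.inverse x ∈ 𝒜.deg g⁻¹ := by
  have h := comp_mul_of_mem_deg hx (Ring.inverse x) g⁻¹
  rw [Ring.mul_inverse_cancel x hu, mul_inv_cancel, 𝒜.comp_of_mem 𝒜.one_mem,
    ← Ring.mul_inverse_cancel x hu] at h
  rw [hu.mul_left_cancel h]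
  exact 𝒜.comp_mem _ _

end Components

section HomogeneousPolynomials

open Polynomial

variable {𝒜 : GradedStr G L}

theorem eval_mem_deg {P : L[X]} {x : L} {g h : G} (hP : P ∈ 𝒜.polyDeg g h) (hx : x ∈ 𝒜.deg g) :
    P.eval x ∈ 𝒜.deg h := by
  rw [eval_eq_sum_range]
  exact sum_mem fun n _ ↦ inv_mul_cancel_right h (g ^ n) ▸ 𝒜.mul_mem (hP n) (pow_mem_deg hx n)

theorem iterate_divX_mem_polyDeg {P : L[X]} {g h : G} (hP : P ∈ 𝒜.polyDeg g h) (i : ℕ) :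
    divX^[i] P ∈ 𝒜.polyDeg g (h * (g ^ i)⁻¹) := fun n ↦ by
  rw [coeff_iterate_divX, mul_assoc, ← mul_inv, ← pow_add, add_comm i]
  exact hP (n + i)

theorem hornerEval_mem_deg {P : L[X]} {x : L} {g h : G} (hP : P ∈ 𝒜.polyDeg g h)
    (hx : x ∈ 𝒜.deg g) (i : ℕ) : hornerEval P x i ∈ 𝒜.deg (h * (g ^ i)⁻¹) :=
  eval_mem_deg (iterate_divX_mem_polyDeg hP i) hx

theorem C_mul_mem_polyDeg {P : L[X]} {a : L} {g h k : G} (ha : a ∈ 𝒜.deg k)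
    (hP : P ∈ 𝒜.polyDeg g h) : C a * P ∈ 𝒜.polyDeg g (k * h) := fun n ↦ by
  rw [coeff_C_mul, mul_assoc]
  exact 𝒜.mul_mem ha (hP n)

variable (𝒜) in
/-- The homogeneous component of degree `h` of the polynomial `P` when `X` is given degree `g`;
it lies in `polyDeg 𝒜 g h`. -/
noncomputable def polyComp (g h : G) (P : L[X]) : L[X] :=
  ∑ n ∈ Finset.range (P.natDegree + 1), monomial n (𝒜.comp (P.coeff n) (h * (g ^ n)⁻¹))

theorem coeff_polyComp (g h : G) (P : L[X]) (n : ℕ) :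
    (𝒜.polyComp g h P).coeff n = 𝒜.comp (P.coeff n) (h * (g ^ n)⁻¹) := by
  simp only [polyComp, finsetSum_coeff, coeff_monomial, Finset.sum_ite_eq', Finset.mem_range]
  split_ifs with hn
  · rfl
  · rw [coeff_eq_zero_of_natDegree_lt (by omega), comp_zero]

theorem polyComp_mem_polyDeg (g h : G) (P : L[X]) :
    𝒜.polyComp g h P ∈ 𝒜.polyDeg g h := fun n ↦ by
  rw [coeff_polyComp]
  exact 𝒜.comp_mem _ _

theorem eval_polyComp {x : L} {g : G} (hx : x ∈ 𝒜.deg g) (h : G) (P : L[X]) :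
    (𝒜.polyComp g h P).eval x = 𝒜.comp (P.eval x) h := by
  rw [polyComp, eval_finsetSum, eval_eq_sum_range, comp_sum]
  refine Finset.sum_congr rfl fun n _ ↦ ?_
  have hn := comp_mul_of_mem_deg (pow_mem_deg hx n) (P.coeff n) (h * (g ^ n)⁻¹)
  rw [mul_comm h, mul_inv_cancel_left] at hn
  rw [eval_monomial, mul_comm (P.coeff n), hn, mul_comm, mul_comm h]

theorem monic_polyComp {P : L[X]} (hP : P.Monic) (g : G) :
    (𝒜.polyComp g (g ^ P.natDegree) P).Monic := by
  refine monic_of_natDegree_le_of_coeff_eq_one P.natDegree ?_ ?_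
  · refine natDegree_le_iff_coeff_eq_zero.2 fun n hn ↦ ?_
    rw [coeff_polyComp, coeff_eq_zero_of_natDegree_lt hn, comp_zero]
  · rw [coeff_polyComp, hP.coeff_natDegree, mul_inv_cancel, 𝒜.comp_of_mem 𝒜.one_mem]

theorem exists_monic_mem_polyDeg_of_integralOver {S : Subring L} (hS : 𝒜.IsGradedSubring S)
    {x : L} {g : G} (hx : x ∈ 𝒜.deg g) (hxS : IntegralOver S x) :
    ∃ P : L[X], P.Monic ∧ (∀ n, P.coeff n ∈ S) ∧ P.eval x = 0 ∧ ∃ h, P ∈ 𝒜.polyDeg g h := by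
  obtain ⟨P, hP, hPS, hPx⟩ := hxS
  refine ⟨𝒜.polyComp g (g ^ P.natDegree) P, monic_polyComp hP g, fun n ↦ ?_, ?_,
    _, polyComp_mem_polyDeg _ _ _⟩
  · rw [coeff_polyComp]
    exact hS _ (hPS n) _
  · rw [eval_polyComp hx, hPx, comp_zero]

end HomogeneousPolynomials

end GradedStr

namespace IsHomogIdealOf

variable {𝒜 : GradedStr G L} {S p : Set L}

/-- The additive subgroup underlying a homogeneous ideal `p` of `S`. -/
def toAddSubgroup (hp : IsHomogIdealOf 𝒜 S p) : AddSubgroup L where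
  carrier := p
  zero_mem' := hp.2.1
  add_mem' {x y} hx hy := hp.2.2.1 x hx y hy
  neg_mem' {x} hx := hp.2.2.2.1 x hx

theorem subset (hp : IsHomogIdealOf 𝒜 S p) : p ⊆ S := hp.1

theorem zero_mem (hp : IsHomogIdealOf 𝒜 S p) : 0 ∈ p := hp.2.1

theorem sub_mem (hp : IsHomogIdealOf 𝒜 S p) {x y : L} (hx : x ∈ p) (hy : y ∈ p) : x - y ∈ p :=
  hp.toAddSubgroup.sub_mem hx hy

theorem mul_mem (hp : IsHomogIdealOf 𝒜 S p) {s x : L} (hs : s ∈ S) (hx : x ∈ p) : s * x ∈ p :=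
  hp.2.2.2.2.1 s hs x hx

theorem mem_iff_forall_comp_mem (hp : IsHomogIdealOf 𝒜 S p) {x : L} :
    x ∈ p ↔ ∀ g, 𝒜.comp x g ∈ p :=
  ⟨hp.2.2.2.2.2 x, fun h ↦ GradedStr.mem_of_forall_comp_mem (T := hp.toAddSubgroup) h⟩

end IsHomogIdealOf

namespace IsGradedPrimeOf

variable {𝒜 : GradedStr G L} {S p : Set L}

theorem isHomogIdealOf (hp : IsGradedPrimeOf 𝒜 S p) : IsHomogIdealOf 𝒜 S p := hp.1

theorem one_notMem (hp : IsGradedPrimeOf 𝒜 S p) : 1 ∉ p := hp.2.1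

theorem mul_notMem (hp : IsGradedPrimeOf 𝒜 S p) {a b : L} (ha : a ∈ S) (hb : b ∈ S)
    (hah : 𝒜.IsHomog a) (hbh : 𝒜.IsHomog b) (hap : a ∉ p) (hbp : b ∉ p) : a * b ∉ p :=
  fun h ↦ (hp.2.2 a ha b hb hah hbh h).elim hap hbp

theorem inter {T S : Subring L} {p : Set L} (hp : IsGradedPrimeOf 𝒜 T p) (hST : S ≤ T)
    (hS : 𝒜.IsGradedSubring S) : IsGradedPrimeOf 𝒜 S (p ∩ S) := by
  obtain ⟨⟨-, h0, hadd, hneg, hmul, hcomp⟩, h1, hprime⟩ := hp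
  exact ⟨⟨Set.inter_subset_right, ⟨h0, S.zero_mem⟩,
    fun x hx y hy ↦ ⟨hadd x hx.1 y hy.1, S.add_mem hx.2 hy.2⟩,
    fun x hx ↦ ⟨hneg x hx.1, S.neg_mem hx.2⟩,
    fun s hs x hx ↦ ⟨hmul s (hST hs) x hx.1, S.mul_mem hs hx.2⟩,
    fun x hx g ↦ ⟨hcomp x hx.1 g, hS x hx.2 g⟩⟩, fun h ↦ h1 h.1,
    fun a ha b hb hah hbh hab ↦
      (hprime a (hST ha) b (hST hb) hah hbh hab.1).imp (⟨·, ha⟩) (⟨·, hb⟩)⟩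

end IsGradedPrimeOf

section GradedIntegralClosure

variable {𝒜 : GradedStr G L} {S : Subring L}

theorem mem_gIntClosure_iff {x : L} : x ∈ gIntClosure 𝒜 S ↔ ∀ g, IsIntegral S (𝒜.comp x g) :=
  forall_congr' fun _ ↦ integralOver_iff_isIntegral S _

theorem mem_gIntClosure_iff_of_isHomog {x : L} (hx : 𝒜.IsHomog x) :
    x ∈ gIntClosure 𝒜 S ↔ IsIntegral S x :=
  let ⟨_, hg⟩ := hx
  mem_gIntClosure_iff.trans (GradedStr.forall_comp_iff_of_mem_deg isIntegral_zero hg)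

theorem zero_mem_gIntClosure : 0 ∈ gIntClosure 𝒜 S :=
  (mem_gIntClosure_iff_of_isHomog ⟨1, (𝒜.deg 1).zero_mem⟩).2 isIntegral_zero

theorem add_mem_gIntClosure {x y : L} (hx : x ∈ gIntClosure 𝒜 S) (hy : y ∈ gIntClosure 𝒜 S) :
    x + y ∈ gIntClosure 𝒜 S :=
  mem_gIntClosure_iff.2 fun g ↦
    𝒜.comp_add x y g ▸ (mem_gIntClosure_iff.1 hx g).add (mem_gIntClosure_iff.1 hy g)

variable (𝒜 S) in
/-- `gIntClosure 𝒜 S`, the graded integral closure of `S` in the ambient graded ring, as a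
subring. -/
def gradedIntegralClosure : Subring L where
  carrier := gIntClosure 𝒜 S
  zero_mem' := zero_mem_gIntClosure
  one_mem' := (mem_gIntClosure_iff_of_isHomog 𝒜.isHomog_one).2 isIntegral_one
  add_mem' := add_mem_gIntClosure
  neg_mem' {x} hx :=
    mem_gIntClosure_iff.2 fun g ↦ 𝒜.comp_neg x g ▸ (mem_gIntClosure_iff.1 hx g).neg
  mul_mem' {x y} hx hy :=
    GradedStr.mul_mem_of_forall_comp_mul_comp_mem (𝒜 := 𝒜)
      (T := ⟨⟨gIntClosure 𝒜 S, add_mem_gIntClosure⟩, zero_mem_gIntClosure⟩) fun g k ↦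
        (mem_gIntClosure_iff_of_isHomog ((𝒜.isHomog_comp x g).mul (𝒜.isHomog_comp y k))).2
          ((mem_gIntClosure_iff.1 hx g).mul (mem_gIntClosure_iff.1 hy k))

theorem isGradedSubring_gradedIntegralClosure :
    𝒜.IsGradedSubring (gradedIntegralClosure 𝒜 S) := fun x hx g ↦
  (mem_gIntClosure_iff_of_isHomog (𝒜.isHomog_comp x g)).2 (mem_gIntClosure_iff.1 hx g)

theorem le_gradedIntegralClosure (hS : 𝒜.IsGradedSubring S) : S ≤ gradedIntegralClosure 𝒜 S :=
  fun x hx ↦ mem_gIntClosure_iff.2 fun g ↦ isIntegral_algebraMap (x := (⟨_, hS x hx g⟩ : S))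

end GradedIntegralClosure

section Localization

variable {𝒜 : GradedStr G L} {S : Subring L} {p : Set L}

/-- `gradedLoc 𝒜 S p`, the graded localization of `S` at the graded prime `p`, as a subring. -/
def gradedLocalization (hp : IsGradedPrimeOf 𝒜 S p) : Subring L where
  carrier := gradedLoc 𝒜 S p
  zero_mem' := ⟨0, S.zero_mem, 1, S.one_mem, 𝒜.isHomog_one, hp.one_notMem, mul_zero 1⟩
  one_mem' := ⟨1, S.one_mem, 1, S.one_mem, 𝒜.isHomog_one, hp.one_notMem, mul_one 1⟩
  add_mem' := by
    rintro x y ⟨a, ha, s, hs, hsh, hsp, hsx⟩ ⟨b, hb, t, ht, hth, htp, hty⟩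
    exact ⟨t * a + s * b, S.add_mem (S.mul_mem ht ha) (S.mul_mem hs hb), s * t, S.mul_mem hs ht,
      hsh.mul hth, hp.mul_notMem hs ht hsh hth hsp htp, by rw [← hsx, ← hty]; ring⟩
  neg_mem' := by
    rintro x ⟨a, ha, s, hs, hsh, hsp, hsx⟩
    exact ⟨-a, S.neg_mem ha, s, hs, hsh, hsp, by rw [mul_neg, hsx]⟩
  mul_mem' := by
    rintro x y ⟨a, ha, s, hs, hsh, hsp, hsx⟩ ⟨b, hb, t, ht, hth, htp, hty⟩
    exact ⟨a * b, S.mul_mem ha hb, s * t, S.mul_mem hs ht, hsh.mul hth,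
      hp.mul_notMem hs ht hsh hth hsp htp, by rw [mul_mul_mul_comm, hsx, hty]⟩

theorem isGradedSubring_gradedLocalization (hS : 𝒜.IsGradedSubring S)
    (hp : IsGradedPrimeOf 𝒜 S p) : 𝒜.IsGradedSubring (gradedLocalization hp) := by
  rintro x ⟨a, ha, s, hs, ⟨h, hsh⟩, hsp, hsx⟩ g
  refine ⟨_, hS a ha (h * g), s, hs, ⟨h, hsh⟩, hsp, ?_⟩
  rw [← hsx, GradedStr.comp_mul_of_mem_deg hsh]

theorem le_gradedLocalization (hp : IsGradedPrimeOf 𝒜 S p) : S ≤ gradedLocalization hp :=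
  fun x hx ↦ ⟨x, hx, 1, S.one_mem, 𝒜.isHomog_one, hp.one_notMem, one_mul x⟩

theorem inverse_mem_gradedLoc {s : L} (hs : s ∈ S) (hsh : 𝒜.IsHomog s) (hsp : s ∉ p)
    (hu : IsUnit s) : Ring.inverse s ∈ gradedLoc 𝒜 S p :=
  ⟨1, S.one_mem, s, hs, hsh, hsp, Ring.mul_inverse_cancel s hu⟩

theorem gmaxIdeal_gradedLoc_inter (hL : 𝒜.IsGradedField) (hS : 𝒜.IsGradedSubring S)
    (hp : IsGradedPrimeOf 𝒜 S p) : gmaxIdeal 𝒜 (gradedLoc 𝒜 S p) ∩ S = p := by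
  ext x
  constructor
  · rintro ⟨⟨-, hx⟩, hxS⟩
    refine hp.isHomogIdealOf.mem_iff_forall_comp_mem.2 fun g ↦ ?_
    by_contra hgp
    have hg0 : 𝒜.comp x g ≠ 0 := fun h ↦ hgp (h ▸ hp.isHomogIdealOf.zero_mem)
    exact hx g hg0 (inverse_mem_gradedLoc (hS x hxS g) (𝒜.isHomog_comp x g) hgp
      (hL.2 _ (𝒜.isHomog_comp x g) hg0))
  · intro hxp
    have hxS := hp.isHomogIdealOf.subset hxp
    refine ⟨⟨le_gradedLocalization hp hxS, fun g hg0 ↦ ?_⟩, hxS⟩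
    rintro ⟨a, ha, s, -, -, hsp, hsx⟩
    have hs : s = a * 𝒜.comp x g := by
      rw [← hsx, Ring.inverse_mul_cancel_right _ _ (hL.2 _ (𝒜.isHomog_comp x g) hg0)]
    exact hsp (hs ▸ hp.isHomogIdealOf.mul_mem ha
      (hp.isHomogIdealOf.mem_iff_forall_comp_mem.1 hxp g))

theorem mem_or_inverse_mem_gradedLoc {P : Polynomial L} {f : L} {j : ℕ}
    (hp : IsHomogIdealOf 𝒜 S p) (hf : 𝒜.IsHomog f) (hu : IsUnit f)
    (hb : ∀ i, hornerEval P f i ∈ S) (hfb : ∀ i, f * hornerEval P f i ∈ S)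
    (hbh : ∀ i, 𝒜.IsHomog (hornerEval P f i)) (hj : P.coeff j ∉ p) :
    f ∈ gradedLoc 𝒜 S p ∨ Ring.inverse f ∈ gradedLoc 𝒜 S p := by
  by_cases hbj : hornerEval P f j ∈ p
  · have hfbj : f * hornerEval P f (j + 1) ∉ p := fun h ↦ hj <| by
      rw [← add_sub_cancel_left (f * _) (P.coeff j), ← hornerEval_eq_mul_add]
      exact hp.sub_mem hbj h
    refine .inr ⟨_, hb (j + 1), _, hfb (j + 1), hf.mul (hbh _), hfbj, ?_⟩
    rw [mul_right_comm, Ring.mul_inverse_cancel f hu, one_mul]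
  · exact .inl ⟨_, hfb j, _, hb j, hbh j, hbj, mul_comm _ _⟩

end Localization

section Maximality

variable {𝒜 : GradedStr G L} {O S : Subring L} {p q : Set L}

theorem mem_gmaxIdeal_iff_of_isHomog {S : Set L} {x : L} (hx : 𝒜.IsHomog x) :
    x ∈ gmaxIdeal 𝒜 S ↔ x ∈ S ∧ (x ≠ 0 → Ring.inverse x ∉ S) :=
  let ⟨_, hg⟩ := hx
  and_congr_right fun _ ↦
    GradedStr.forall_comp_iff_of_mem_deg (P := fun y ↦ y ≠ 0 → Ring.inverse y ∉ S) (absurd rfl) hg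

theorem ne_zero_and_inverse_mem_of_notMem_gmaxIdeal {S : Set L} {x : L} (hxS : x ∈ S)
    (hx : 𝒜.IsHomog x) (hxm : x ∉ gmaxIdeal 𝒜 S) : x ≠ 0 ∧ Ring.inverse x ∈ S := by
  rw [mem_gmaxIdeal_iff_of_isHomog hx] at hxm
  push Not at hxm
  exact hxm hxS

theorem exists_coeff_mem_of_eval_eq_zero {P : Polynomial L} {x : L}
    (hp : IsGradedPrimeOf 𝒜 S p) (hq : IsHomogIdealOf 𝒜 S q) (hpq : p ⊆ q) (hxq : x ∈ q)
    (hxp : x ∉ p) (hx : 𝒜.IsHomog x) (hP : P.Monic) (hPS : ∀ n, P.coeff n ∈ S)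
    (hPx : P.eval x = 0) (hbh : ∀ i, 𝒜.IsHomog (hornerEval P x i)) :
    ∃ k, P.coeff k ∈ q ∧ P.coeff k ∉ p := by
  have hxS := hq.subset hxq
  have hb := hornerEval_mem hPS hxS
  obtain ⟨k, hk, hk'⟩ : ∃ k, ¬hornerEval P x k ∉ p ∧ hornerEval P x (k + 1) ∉ p :=
    Nat.exists_not_and_succ_of_not_zero_of_exists
      (not_not.2 (by rw [hornerEval_zero, hPx]; exact hp.isHomogIdealOf.zero_mem))
      ⟨P.natDegree, by rw [hornerEval_natDegree_of_monic hP]; exact hp.one_notMem⟩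
  rw [not_not] at hk
  have hxb : x * hornerEval P x (k + 1) ∉ p := hp.mul_notMem hxS (hb _) hx (hbh _) hxp hk'
  refine ⟨k, ?_, fun hc ↦ hxb ?_⟩
  · rw [← add_sub_cancel_left (x * hornerEval P x (k + 1)) (P.coeff k), ← hornerEval_eq_mul_add]
    exact hq.sub_mem (hpq hk) (mul_comm x _ ▸ hq.mul_mem (hb _) hxq)
  · rw [← add_sub_cancel_right (x * _) (P.coeff k), ← hornerEval_eq_mul_add]
    exact hp.isHomogIdealOf.sub_mem hk hc

theorem IsGradedPrimeOf.eq_of_subset_of_one_notMem (hL : 𝒜.IsGradedField)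
    (hO : 𝒜.IsGradedSubring O) (hOS : O ≤ S) (hSO : ∀ x ∈ S, 𝒜.IsHomog x → IntegralOver O x)
    (hp : IsGradedPrimeOf 𝒜 S p) (hOp : gmaxIdeal 𝒜 O ⊆ p) (hq : IsHomogIdealOf 𝒜 S q)
    (hpq : p ⊆ q) (h1 : 1 ∉ q) : q = p := by
  refine Set.Subset.antisymm (fun y hy ↦ hp.isHomogIdealOf.mem_iff_forall_comp_mem.2 fun g ↦ ?_) hpq
  set x := 𝒜.comp y g
  have hxg : x ∈ 𝒜.deg g := 𝒜.comp_mem y g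
  have hxq : x ∈ q := hq.mem_iff_forall_comp_mem.1 hy g
  by_contra hxp
  obtain ⟨P, hP, hPO, hPx, h, hPh⟩ :=
    GradedStr.exists_monic_mem_polyDeg_of_integralOver hO hxg (hSO x (hq.subset hxq) ⟨g, hxg⟩)
  obtain ⟨k, hkq, hkp⟩ := exists_coeff_mem_of_eval_eq_zero hp hq hpq hxq hxp ⟨g, hxg⟩ hP
    (fun n ↦ hOS (hPO n)) hPx fun i ↦ ⟨_, GradedStr.hornerEval_mem_deg hPh hxg i⟩
  have hkh : 𝒜.IsHomog (P.coeff k) := ⟨_, hPh k⟩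
  obtain ⟨hk0, hkO⟩ := ne_zero_and_inverse_mem_of_notMem_gmaxIdeal (hPO k) hkh fun hk ↦ hkp (hOp hk)
  refine h1 ?_
  rw [← Ring.inverse_mul_cancel _ (hL.2 _ hkh hk0)]
  exact hq.mul_mem (hOS hkO) hkq

end Maximality

section ValuationRings

variable {𝒜 : GradedStr G L}

theorem GradedStr.isGradedSubfield_top : 𝒜.IsGradedSubfield ⊤ :=
  ⟨fun _ _ _ ↦ Subring.mem_top _, fun _ _ _ _ ↦ Subring.mem_top _⟩

theorem GradedStr.IsHomog.inverse {x : L} (hx : 𝒜.IsHomog x) (hu : IsUnit x) :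
    𝒜.IsHomog (Ring.inverse x) :=
  let ⟨_, hg⟩ := hx
  ⟨_, GradedStr.inverse_mem_deg hg hu⟩

section Subfield

variable {K O : Subring L}

theorem mul_inverse_mem_or_mul_inverse_mem (hL : 𝒜.IsGradedField) (hK : 𝒜.IsGradedSubfield K)
    (hO : ∀ f ∈ K, f ≠ 0 → 𝒜.IsHomog f → f ∈ O ∨ Ring.inverse f ∈ O) {a b : L}
    (haK : a ∈ K) (hbK : b ∈ K) (hah : 𝒜.IsHomog a) (hbh : 𝒜.IsHomog b) (ha : a ≠ 0)
    (hb : b ≠ 0) : a * Ring.inverse b ∈ O ∨ b * Ring.inverse a ∈ O := by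
  have := hL.1
  have hau := hL.2 a hah ha
  have hbu := hL.2 b hbh hb
  have hba : b * Ring.inverse a = Ring.inverse (a * Ring.inverse b) := by
    rw [Ring.mul_inverse_rev, Ring.inverse_inverse hbu]
  rw [hba]
  exact hO _ (K.mul_mem haK (hK.2 b hbK hbh hb)) (hau.mul hbu.ringInverse).ne_zero
    (hah.mul (hbh.inverse hbu))

theorem exists_forall_mul_inverse_mem (hL : 𝒜.IsGradedField) (hK : 𝒜.IsGradedSubfield K)
    (hO : ∀ f ∈ K, f ≠ 0 → 𝒜.IsHomog f → f ∈ O ∨ Ring.inverse f ∈ O) {s : Finset L}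
    (hs : s.Nonempty) (hsK : ∀ a ∈ s, a ∈ K ∧ 𝒜.IsHomog a ∧ a ≠ 0) :
    ∃ b ∈ s, ∀ a ∈ s, a * Ring.inverse b ∈ O := by
  induction hs using Finset.Nonempty.cons_induction with
  | singleton a =>
    obtain ⟨-, hah, ha0⟩ := hsK a (Finset.mem_singleton_self a)
    refine ⟨a, Finset.mem_singleton_self a, fun c hc ↦ ?_⟩
    rw [Finset.mem_singleton.1 hc, Ring.mul_inverse_cancel a (hL.2 a hah ha0)]
    exact O.one_mem
  | cons a s ha _ ih =>
    rw [Finset.forall_mem_cons] at hsK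
    obtain ⟨⟨haK, hah, ha0⟩, hsK⟩ := hsK
    obtain ⟨b, hbs, hb⟩ := ih hsK
    obtain ⟨hbK, hbh, hb0⟩ := hsK b hbs
    rcases mul_inverse_mem_or_mul_inverse_mem hL hK hO haK hbK hah hbh ha0 hb0 with hab | hba
    · exact ⟨b, Finset.mem_cons_of_mem hbs, (Finset.forall_mem_cons _ _).2 ⟨hab, hb⟩⟩
    · refine ⟨a, Finset.mem_cons_self a s, (Finset.forall_mem_cons _ _).2 ⟨?_, fun c hc ↦ ?_⟩⟩
      · rw [Ring.mul_inverse_cancel a (hL.2 a hah ha0)]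
        exact O.one_mem
      · rw [← Ring.inverse_mul_cancel_right b c (hL.2 b hbh hb0), mul_assoc]
        exact O.mul_mem (hb c hc) hba

theorem exists_mem_polyDeg_coeff_eq_one (hL : 𝒜.IsGradedField) (hK : 𝒜.IsGradedSubfield K)
    (hO : ∀ f ∈ K, f ≠ 0 → 𝒜.IsHomog f → f ∈ O ∨ Ring.inverse f ∈ O) {x : L} {g : G}
    (hx : x ∈ 𝒜.deg g) (hxK : IntegralOver K x) :
    ∃ P : Polynomial L, (∀ n, P.coeff n ∈ O) ∧ P.eval x = 0 ∧ (∃ h, P ∈ 𝒜.polyDeg g h) ∧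
      ∃ j, P.coeff j = 1 := by
  have := hL.1
  obtain ⟨P, hP, hPK, hPx, h, hPh⟩ := GradedStr.exists_monic_mem_polyDeg_of_integralOver hK.1 hx hxK
  have hcoeffs : ∀ c ∈ P.coeffs, c ∈ K ∧ 𝒜.IsHomog c ∧ c ≠ 0 := fun c hc ↦ by
    obtain ⟨n, hn, rfl⟩ := Polynomial.mem_coeffs_iff.1 hc
    exact ⟨hPK n, ⟨_, hPh n⟩, Polynomial.mem_support_iff.1 hn⟩
  obtain ⟨c, hc, hcO⟩ := exists_forall_mul_inverse_mem hL hK hO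
    (Polynomial.coeffs_nonempty_iff.2 hP.ne_zero) hcoeffs
  obtain ⟨j, hj, rfl⟩ := Polynomial.mem_coeffs_iff.1 hc
  have hju : IsUnit (P.coeff j) := hL.2 _ ⟨_, hPh j⟩ (Polynomial.mem_support_iff.1 hj)
  refine ⟨Polynomial.C (Ring.inverse (P.coeff j)) * P, fun n ↦ ?_, ?_,
    ⟨_, GradedStr.C_mul_mem_polyDeg (GradedStr.inverse_mem_deg (hPh j) hju) hPh⟩, j, ?_⟩
  · rw [Polynomial.coeff_C_mul, mul_comm]
    by_cases hn : P.coeff n = 0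
    · rw [hn, zero_mul]; exact O.zero_mem
    · exact hcO _ (Polynomial.coeff_mem_coeffs hn)
  · rw [Polynomial.eval_mul, hPx, mul_zero]
  · rw [Polynomial.coeff_C_mul, Ring.inverse_mul_cancel _ hju]

end Subfield

section GVRing

variable {V : Subring L}

theorem isGVRing_coe_iff : IsGVRing 𝒜 V ↔ 𝒜.IsGradedSubring V ∧
    ∀ f : L, f ≠ 0 → 𝒜.IsHomog f → f ∈ V ∨ Ring.inverse f ∈ V :=
  ⟨fun h ↦ h.2.2.2.2.2, fun h ↦ ⟨V.zero_mem, V.one_mem, fun _ hx _ hy ↦ V.add_mem hx hy,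
    fun _ hx ↦ V.neg_mem hx, fun _ hx _ hy ↦ V.mul_mem hx hy, h⟩⟩

theorem IsGVRing.exists_subring {V : Set L} (hV : IsGVRing 𝒜 V) : ∃ W : Subring L, ↑W = V :=
  let ⟨h0, h1, hadd, hneg, hmul, _⟩ := hV
  ⟨{ carrier := V, zero_mem' := h0, one_mem' := h1, add_mem' {x y} hx hy := hadd x hx y hy,
     neg_mem' {x} hx := hneg x hx, mul_mem' {x y} hx hy := hmul x hx y hy }, rfl⟩

theorem IsGVRing.mem_of_isIntegral (hV : IsGVRing 𝒜 V) (hL : 𝒜.IsGradedField) {x : L}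
    (hx : 𝒜.IsHomog x) (hxV : IsIntegral V x) : x ∈ V := by
  by_cases hx0 : x = 0
  · exact hx0 ▸ V.zero_mem
  refine ((isGVRing_coe_iff.1 hV).2 x hx0 hx).elim id fun hxi ↦ ?_
  obtain ⟨P, hP, hPV, hPx⟩ := (integralOver_iff_isIntegral V x).2 hxV
  have hb := hornerEval_mem_of_eval_eq_zero hPV hPx hxi (Ring.inverse_mul_cancel x (hL.2 x hx hx0))
  have h := mul_hornerEval_mem hPV hPx hb P.natDegree
  rwa [hornerEval_natDegree_of_monic hP, mul_one] at h

theorem IsGVRing.gIntClosure_subset (hV : IsGVRing 𝒜 V) (hL : 𝒜.IsGradedField) {O : Subring L}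
    (hOV : O ≤ V) : gIntClosure 𝒜 O ⊆ V := fun x hx ↦
  GradedStr.mem_of_forall_comp_mem (𝒜 := 𝒜) fun g ↦ hV.mem_of_isIntegral hL (𝒜.isHomog_comp x g)
    ((integralOver_iff_isIntegral _ _).1 ((hx g).mono hOV))

end GVRing

section MaximalIdeal

variable {V : Subring L}

theorem zero_mem_gmaxIdeal : 0 ∈ gmaxIdeal 𝒜 V :=
  ⟨V.zero_mem, fun g h ↦ absurd (𝒜.comp_zero g) h⟩

theorem mem_gmaxIdeal_iff_forall_comp_mem (hV : 𝒜.IsGradedSubring V) {x : L} :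
    x ∈ gmaxIdeal 𝒜 V ↔ ∀ g, 𝒜.comp x g ∈ gmaxIdeal 𝒜 V := by
  simp only [fun g ↦ mem_gmaxIdeal_iff_of_isHomog (S := (V : Set L)) (𝒜.isHomog_comp x g)]
  exact ⟨fun hx g ↦ ⟨hV x hx.1 g, hx.2 g⟩,
    fun h ↦ ⟨GradedStr.mem_of_forall_comp_mem fun g ↦ (h g).1, fun g ↦ (h g).2⟩⟩

theorem mul_mem_gmaxIdeal_of_isHomog (hL : 𝒜.IsGradedField) {s x : L} (hs : s ∈ V)
    (hx : x ∈ gmaxIdeal 𝒜 V) (hxh : 𝒜.IsHomog x) (hsxh : 𝒜.IsHomog (s * x)) :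
    s * x ∈ gmaxIdeal 𝒜 V := by
  rw [mem_gmaxIdeal_iff_of_isHomog hxh] at hx
  refine (mem_gmaxIdeal_iff_of_isHomog hsxh).2 ⟨V.mul_mem hs hx.1, fun hsx h ↦ ?_⟩
  have hx0 : x ≠ 0 := right_ne_zero_of_mul hsx
  refine hx.2 hx0 ?_
  have hxi : Ring.inverse x = s * Ring.inverse (s * x) := by
    rw [Ring.eq_mul_inverse_iff_mul_eq _ _ _ (hL.2 _ hsxh hsx), mul_left_comm,
      Ring.inverse_mul_cancel x (hL.2 x hxh hx0), mul_one]
  rw [hxi]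
  exact V.mul_mem hs h

theorem IsGVRing.add_mem_gmaxIdeal_of_mem_deg (hV : IsGVRing 𝒜 V) (hL : 𝒜.IsGradedField) {a b : L}
    {g : G} (ha : a ∈ gmaxIdeal 𝒜 V) (hb : b ∈ gmaxIdeal 𝒜 V) (hag : a ∈ 𝒜.deg g)
    (hbg : b ∈ 𝒜.deg g) : a + b ∈ gmaxIdeal 𝒜 V := by
  by_cases ha0 : a = 0
  · rwa [ha0, zero_add]
  by_cases hb0 : b = 0
  · rwa [hb0, add_zero]
  wlog h : a * Ring.inverse b ∈ V generalizing a b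
  · rw [add_comm]
    exact this hb ha hbg hag hb0 ha0 <| (mul_inverse_mem_or_mul_inverse_mem hL
      GradedStr.isGradedSubfield_top (fun f _ ↦ (isGVRing_coe_iff.1 hV).2 f) (Subring.mem_top a)
      (Subring.mem_top b) ⟨g, hag⟩ ⟨g, hbg⟩ ha0 hb0).resolve_left h
  have hab : a + b = (a * Ring.inverse b + 1) * b := by
    rw [add_mul, one_mul, Ring.inverse_mul_cancel_right _ _ (hL.2 b ⟨g, hbg⟩ hb0)]
  have habg : a + b ∈ 𝒜.deg g := add_mem hag hbg
  rw [hab] at habg ⊢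
  exact mul_mem_gmaxIdeal_of_isHomog hL (V.add_mem h V.one_mem) hb ⟨g, hbg⟩ ⟨g, habg⟩

theorem IsGVRing.add_mem_gmaxIdeal (hV : IsGVRing 𝒜 V) (hL : 𝒜.IsGradedField) {x y : L}
    (hx : x ∈ gmaxIdeal 𝒜 V) (hy : y ∈ gmaxIdeal 𝒜 V) : x + y ∈ gmaxIdeal 𝒜 V := by
  have hVgr := (isGVRing_coe_iff.1 hV).1
  rw [mem_gmaxIdeal_iff_forall_comp_mem hVgr] at hx hy ⊢
  intro g
  rw [𝒜.comp_add]
  exact hV.add_mem_gmaxIdeal_of_mem_deg hL (hx g) (hy g) (𝒜.comp_mem x g) (𝒜.comp_mem y g)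

theorem IsGVRing.mul_mem_gmaxIdeal (hV : IsGVRing 𝒜 V) (hL : 𝒜.IsGradedField) {s x : L}
    (hs : s ∈ V) (hx : x ∈ gmaxIdeal 𝒜 V) : s * x ∈ gmaxIdeal 𝒜 V := by
  have hVgr := (isGVRing_coe_iff.1 hV).1
  exact GradedStr.mul_mem_of_forall_comp_mul_comp_mem (𝒜 := 𝒜)
    (T := ⟨⟨gmaxIdeal 𝒜 V, hV.add_mem_gmaxIdeal hL⟩, zero_mem_gmaxIdeal⟩) fun g k ↦
      mul_mem_gmaxIdeal_of_isHomog hL (hVgr s hs g)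
        ((mem_gmaxIdeal_iff_forall_comp_mem hVgr).1 hx k) (𝒜.isHomog_comp x k)
        ((𝒜.isHomog_comp s g).mul (𝒜.isHomog_comp x k))

theorem IsGVRing.isGradedPrimeOf_gmaxIdeal (hV : IsGVRing 𝒜 V) (hL : 𝒜.IsGradedField) :
    IsGradedPrimeOf 𝒜 V (gmaxIdeal 𝒜 V) := by
  have := hL.1
  have hVgr := (isGVRing_coe_iff.1 hV).1
  refine ⟨⟨fun x hx ↦ hx.1, zero_mem_gmaxIdeal, fun x hx y hy ↦ hV.add_mem_gmaxIdeal hL hx hy,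
    fun x hx ↦ neg_one_mul x ▸ hV.mul_mem_gmaxIdeal hL (V.neg_mem V.one_mem) hx,
    fun s hs x hx ↦ hV.mul_mem_gmaxIdeal hL hs hx,
    fun x hx ↦ (mem_gmaxIdeal_iff_forall_comp_mem hVgr).1 hx⟩, fun h ↦ ?_,
    fun a ha b _ hah _ hab ↦ or_iff_not_imp_left.2 fun ham ↦ ?_⟩
  · rw [mem_gmaxIdeal_iff_of_isHomog 𝒜.isHomog_one, Ring.inverse_one] at h
    exact h.2 one_ne_zero h.1
  · obtain ⟨ha0, hai⟩ := ne_zero_and_inverse_mem_of_notMem_gmaxIdeal ha hah ham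
    rw [← Ring.inverse_mul_cancel_left a b (hL.2 a hah ha0)]
    exact hV.mul_mem_gmaxIdeal hL hai hab

end MaximalIdeal

section Centers

variable {V S O : Subring L} {p : Set L}

theorem gradedLoc_gmaxIdeal_inter_subset (hL : 𝒜.IsGradedField) (hSV : S ≤ V) :
    gradedLoc 𝒜 S (gmaxIdeal 𝒜 V ∩ S) ⊆ V := by
  rintro x ⟨a, ha, s, hs, hsh, hsm, hsx⟩
  obtain ⟨hs0, hsi⟩ :=
    ne_zero_and_inverse_mem_of_notMem_gmaxIdeal (hSV hs) hsh fun h ↦ hsm ⟨h, hs⟩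
  rw [← Ring.inverse_mul_cancel_left s x (hL.2 s hsh hs0), hsx]
  exact V.mul_mem hsi (hSV ha)

theorem IsGVRing.eq_gradedLoc (hV : IsGVRing 𝒜 V) (hL : 𝒜.IsGradedField) (hSV : S ≤ V)
    (hS : IsGVRing 𝒜 (gradedLoc 𝒜 S (gmaxIdeal 𝒜 V ∩ S))) :
    (V : Set L) = gradedLoc 𝒜 S (gmaxIdeal 𝒜 V ∩ S) := by
  refine Set.Subset.antisymm (fun y hy ↦ ?_) (gradedLoc_gmaxIdeal_inter_subset hL hSV)
  obtain ⟨W, hW⟩ := hS.exists_subring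
  rw [← hW] at hS ⊢
  refine GradedStr.mem_of_forall_comp_mem (𝒜 := 𝒜) fun g ↦ ?_
  set x := 𝒜.comp y g
  have hx : 𝒜.IsHomog x := 𝒜.isHomog_comp y g
  have hxV : x ∈ V := (isGVRing_coe_iff.1 hV).1 y hy g
  by_cases hx0 : x = 0
  · exact hx0 ▸ W.zero_mem
  have hxu := hL.2 x hx hx0
  refine ((isGVRing_coe_iff.1 hS).2 x hx0 hx).elim id fun hxi ↦ ?_
  rw [← SetLike.mem_coe, hW] at hxi ⊢
  obtain ⟨a, ha, s, hs, hsh, hsm, hsx⟩ := hxi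
  have hax : a * x = s := by rw [← hsx, Ring.inverse_mul_cancel_right x s hxu]
  refine ⟨s, hs, a, ha, hsx ▸ hsh.mul (hx.inverse hxu), fun ham ↦ hsm ⟨?_, hs⟩, hax⟩
  rw [← hax, mul_comm]
  exact hV.mul_mem_gmaxIdeal hL hxV ham.1

theorem isGVRing_gradedLoc_gIntClosure (hL : 𝒜.IsGradedField) {K : Subring L}
    (hK : 𝒜.IsGradedSubfield K) (hint : ∀ x : L, 𝒜.IsHomog x → IntegralOver K x)
    (hO : ∀ f ∈ K, f ≠ 0 → 𝒜.IsHomog f → f ∈ O ∨ Ring.inverse f ∈ O)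
    (hp : IsGradedPrimeOf 𝒜 (gIntClosure 𝒜 O) p) :
    IsGVRing 𝒜 (gradedLoc 𝒜 (gIntClosure 𝒜 O) p) := by
  refine isGVRing_coe_iff.2 ⟨isGradedSubring_gradedLocalization (S := gradedIntegralClosure 𝒜 O)
    isGradedSubring_gradedIntegralClosure hp, fun f hf0 hf ↦ ?_⟩
  obtain ⟨g, hg⟩ := hf
  obtain ⟨P, hPO, hPf, ⟨h, hPh⟩, j, hj⟩ :=
    exists_mem_polyDeg_coeff_eq_one hL hK hO hg (hint f ⟨g, hg⟩)
  have hPO' (n : ℕ) : IsIntegral O (P.coeff n) := isIntegral_algebraMap (x := (⟨_, hPO n⟩ : O))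
  have hbh (i : ℕ) : 𝒜.IsHomog (hornerEval P f i) := ⟨_, GradedStr.hornerEval_mem_deg hPh hg i⟩
  exact mem_or_inverse_mem_gradedLoc (S := gradedIntegralClosure 𝒜 O) hp.isHomogIdealOf ⟨g, hg⟩
    (hL.2 f ⟨g, hg⟩ hf0)
    (fun i ↦ (mem_gIntClosure_iff_of_isHomog (hbh i)).2 (isIntegral_hornerEval hPO' hPf i))
    (fun i ↦ (mem_gIntClosure_iff_of_isHomog (.mul ⟨g, hg⟩ (hbh i))).2
      (isIntegral_mul_hornerEval hPO' hPf i))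
    hbh (hj ▸ hp.one_notMem)

end Centers

end ValuationRings

theorem graded_valuation_rings_of_integral_extension_general
    (𝒜 : GradedStr G L) (hL : 𝒜.IsGradedField)
    (K : Subring L) (hK : 𝒜.IsGradedSubfield K)
    (hint : ∀ x : L, 𝒜.IsHomog x → IntegralOver K x)
    (O : Subring L) (hOgr : 𝒜.IsGradedSubring O)
    (hOval : ∀ f ∈ K, f ≠ 0 → 𝒜.IsHomog f → f ∈ O ∨ Ring.inverse f ∈ O) :
    (∀ p : Set L, IsGradedPrimeOf 𝒜 (gIntClosure 𝒜 O) p →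
      (gmaxIdeal 𝒜 O ⊆ p → ∀ q : Set L, IsHomogIdealOf 𝒜 (gIntClosure 𝒜 O) q → p ⊆ q →
          (1 : L) ∈ q ∨ q = p) ∧
        IsGVRing 𝒜 (gradedLoc 𝒜 (gIntClosure 𝒜 O) p) ∧
        gmaxIdeal 𝒜 (gradedLoc 𝒜 (gIntClosure 𝒜 O) p) ∩ gIntClosure 𝒜 O = p) ∧
    (∀ V : Set L, IsGVRing 𝒜 V → ↑O ⊆ V →
      IsGradedPrimeOf 𝒜 (gIntClosure 𝒜 O) (gmaxIdeal 𝒜 V ∩ gIntClosure 𝒜 O) ∧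
        V = gradedLoc 𝒜 (gIntClosure 𝒜 O) (gmaxIdeal 𝒜 V ∩ gIntClosure 𝒜 O)) := by
  have hgr := isGradedSubring_gradedIntegralClosure (𝒜 := 𝒜) (S := O)
  have hint' : ∀ x ∈ gradedIntegralClosure 𝒜 O, 𝒜.IsHomog x → IntegralOver O x := fun x hx hxh ↦
    (integralOver_iff_isIntegral O x).2 ((mem_gIntClosure_iff_of_isHomog hxh).1 hx)
  refine ⟨fun p hp ↦ ⟨fun hOp q hq hpq ↦ or_iff_not_imp_left.2 ?_,
    isGVRing_gradedLoc_gIntClosure hL hK hint hOval hp, gmaxIdeal_gradedLoc_inter hL hgr hp⟩,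
    fun V hV hOV ↦ ?_⟩
  · exact hp.eq_of_subset_of_one_notMem hL hOgr (le_gradedIntegralClosure hOgr) hint' hOp hq hpq
  · obtain ⟨V, rfl⟩ := hV.exists_subring
    have hle : gradedIntegralClosure 𝒜 O ≤ V := hV.gIntClosure_subset hL hOV
    have hp := (hV.isGradedPrimeOf_gmaxIdeal hL).inter hle hgr
    exact ⟨hp, hV.eq_gradedLoc hL hle (isGVRing_gradedLoc_gIntClosure hL hK hint hOval hp)⟩

/-- Let `K'/K` be an integral extension of `G`-graded fields, `O` a
graded valuation ring of `K`, and `O'` the graded integral closure of `O` in `K'`.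
Every graded prime ideal `m'` of `O'` over the graded maximal ideal `m_O` of `O` is a
graded maximal ideal; for each such `m'` the graded localization `O'_{m'}` is a graded
valuation ring of `K'` whose graded maximal ideal contracts to `m'` in `O'`; and every
graded valuation ring of `K'` dominating `O` arises in this way. -/
theorem graded_valuation_rings_of_integral_extension
    (𝒜 : GradedStr G L) (hL : 𝒜.IsGradedField)
    (K : Subring L) (hK : 𝒜.IsGradedSubfield K)
    (hint : ∀ x : L, 𝒜.IsHomog x → IntegralOver K x)
    (O : Subring L) (hOK : O ≤ K) (hOgr : 𝒜.IsGradedSubring O)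
    (hOval : ∀ f ∈ K, f ≠ 0 → 𝒜.IsHomog f → f ∈ O ∨ Ring.inverse f ∈ O) :
    (∀ p : Set L, IsGradedPrimeOf 𝒜 (gIntClosure 𝒜 O) p →
      p ∩ ↑O = gmaxIdeal 𝒜 ↑O →
      ((∀ q : Set L, IsHomogIdealOf 𝒜 (gIntClosure 𝒜 O) q → p ⊆ q →
          (1 : L) ∈ q ∨ q = p) ∧
        IsGVRing 𝒜 (gradedLoc 𝒜 (gIntClosure 𝒜 O) p) ∧
        gmaxIdeal 𝒜 (gradedLoc 𝒜 (gIntClosure 𝒜 O) p) ∩ gIntClosure 𝒜 O = p)) ∧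
    (∀ O'' : Set L, IsGVRing 𝒜 O'' → ↑O ⊆ O'' →
      gmaxIdeal 𝒜 O'' ∩ ↑O = gmaxIdeal 𝒜 ↑O →
      ∃ p : Set L, IsGradedPrimeOf 𝒜 (gIntClosure 𝒜 O) p ∧
        p ∩ ↑O = gmaxIdeal 𝒜 ↑O ∧ O'' = gradedLoc 𝒜 (gIntClosure 𝒜 O) p) := by
  obtain ⟨hprime, hval⟩ := graded_valuation_rings_of_integral_extension_general
    𝒜 hL K hK hint O hOgr hOval
  have hOint : (O : Set L) ⊆ gIntClosure 𝒜 O := le_gradedIntegralClosure hOgr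
  refine ⟨fun p hp hpO ↦ (hprime p hp).imp_left fun h ↦ h (hpO ▸ Set.inter_subset_left),
    fun O'' hV hO hdom ↦ ⟨_, (hval O'' hV hO).1, ?_, (hval O'' hV hO).2⟩⟩
  rw [Set.inter_assoc, Set.inter_eq_right.2 hOint, hdom]

end Statement10
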